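/- The unitary group U(ℓ₂) of separable infinite-dimensional complex Hilbert space, regarded as a discrete group, is Cayley bounded and has uncountable cofinality; equivalently, every action of U(ℓ₂) by isometries on a metric space has all orbits bounded. -/

import Mathlib

open Pointwise

/-- `G` has uncountable cofinality: it is not the union of a countable strictly
increasing chain of proper subgroups. -/
def UncountableCofinality (G : Type*) [Group G] : Prop :=
  ¬ ∃ H : ℕ → Subgroup G, (∀ n, H n < H (n + 1)) ∧ (∀ n, H n ≠ ⊤) ∧
      (⋃ n, (H n : Set G)) = Set.univ

/-- `G` is Cayley bounded: every symmetric generating set containing the identity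
generates by words of some fixed finite length. -/
def CayleyBounded (G : Type*) [Group G] : Prop :=
  ∀ E : Set G, (1 : G) ∈ E → E⁻¹ = E → Subgroup.closure E = ⊤ →
    ∃ n : ℕ, E ^ n = Set.univ

/-!
The group is even strongly bounded: every length function `ℓ` on it is bounded. This gives the three
conclusions by applying it to the length functions of a filtration by powers, of a chain of
subgroups, and of the displacement of a point.

Write `H` as a Hilbert sum of copies of itself indexed by `ℕ × ℤ`. A diagonal argument over the rows
and a swindle inside a row bound `ℓ` on the unitaries of a single summand, which are the isometries
fixing a certain orthonormal family that is infinite and of infinite codimension. Any two such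
families of the same size are conjugate, so `ℓ` is bounded on the fixator of each of them. Finally,
every isometry `g` is a product of four elements of three such fixators: an infinite-dimensional
subspace contains an orthonormal sequence `f` with `⟪f m, g (f n)⟫ = 0` for `m ≠ n`, so up to
isometries fixing one family, `g` carries a second family orthogonally to a third.
-/

section StronglyBounded

variable {G G' : Type*} [Group G] [Group G']

/-- A group is strongly bounded (has the Bergman property) if every length function on it is
bounded. Length functions are encoded as group seminorms. -/
def StronglyBounded (G : Type*) [Group G] : Prop :=
  ∀ ℓ : GroupSeminorm G, ∃ C, ∀ g, ℓ g ≤ C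

theorem StronglyBounded.of_surjective (h : StronglyBounded G) (f : G →* G')
    (hf : Function.Surjective f) : StronglyBounded G' := fun ℓ => by
  obtain ⟨C, hC⟩ := h (ℓ.comp f)
  exact ⟨C, hf.forall.2 hC⟩

open Classical in
/-- The length function of an exhaustive filtration of a group: the length of `g` is the first
level of the filtration to which `g` belongs. -/
noncomputable def filtrationSeminorm (W : ℕ → Set G) (hone : ∀ n, 1 ∈ W n)
    (hinv : ∀ n, ∀ g ∈ W n, g⁻¹ ∈ W n) (hmul : ∀ m n, W m * W n ⊆ W (m + n))
    (hW : ∀ g, ∃ n, g ∈ W n) : GroupSeminorm G where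
  toFun g := Nat.find (hW g)
  map_one' := by simpa using hone 0
  mul_le' g h := mod_cast Nat.find_min' (hW (g * h))
    (hmul _ _ (Set.mul_mem_mul (Nat.find_spec (hW g)) (Nat.find_spec (hW h))))
  inv' g := by
    have hle : ∀ g, Nat.find (hW g⁻¹) ≤ Nat.find (hW g) := fun g =>
      Nat.find_min' _ (hinv _ g (Nat.find_spec (hW g)))
    exact mod_cast (hle g).antisymm (by simpa only [inv_inv] using hle g⁻¹)

theorem StronglyBounded.exists_eq_univ (h : StronglyBounded G) {W : ℕ → Set G}
    (hone : ∀ n, 1 ∈ W n) (hinv : ∀ n, ∀ g ∈ W n, g⁻¹ ∈ W n)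
    (hmul : ∀ m n, W m * W n ⊆ W (m + n)) (hW : ∀ g, ∃ n, g ∈ W n) :
    ∃ n, W n = Set.univ := by
  classical
  obtain ⟨C, hC⟩ := h (filtrationSeminorm W hone hinv hmul hW)
  refine ⟨⌊C⌋₊, Set.eq_univ_of_forall fun g => ?_⟩
  obtain ⟨k, hk⟩ := Nat.exists_eq_add_of_le (Nat.le_floor (hC g))
  rw [hk]
  exact hmul _ _ ⟨g, Nat.find_spec (hW g), 1, hone k, mul_one g⟩

theorem StronglyBounded.uncountableCofinality (h : StronglyBounded G) :
    UncountableCofinality G := by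
  rintro ⟨H, hlt, hne, hunion⟩
  have hmono : Monotone H := monotone_nat_of_le_succ fun n => (hlt n).le
  obtain ⟨n, hn⟩ := h.exists_eq_univ (W := fun n => (H n : Set G)) (fun n => (H n).one_mem)
    (fun n g => (H n).inv_mem)
    (fun m n => Set.mul_subset_iff.2 fun g hg g' hg' =>
      (H (m + n)).mul_mem (hmono le_self_add hg) (hmono le_add_self hg'))
    (Set.iUnion_eq_univ_iff.1 hunion)
  exact hne n (Subgroup.coe_eq_univ.1 hn)

theorem StronglyBounded.cayleyBounded (h : StronglyBounded G) : CayleyBounded G := by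
  intro E hone hinv hgen
  have hinv_mem : ∀ n, ∀ g ∈ E ^ n, g⁻¹ ∈ E ^ n := fun n g hg => by
    rwa [← Set.mem_inv, ← inv_pow, hinv]
  refine h.exists_eq_univ (fun n => Set.one_mem_pow hone) hinv_mem
    (fun m n => (pow_add E m n).ge) fun g => ?_
  have hg : g ∈ Subgroup.closure E := hgen ▸ Subgroup.mem_top g
  induction hg using Subgroup.closure_induction with
  | mem x hx => exact ⟨1, by rwa [pow_one]⟩
  | one => exact ⟨0, Set.one_mem_pow hone⟩
  | mul x y _ _ hx hy =>
    obtain ⟨m, hm⟩ := hx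
    obtain ⟨n, hn⟩ := hy
    exact ⟨m + n, pow_add E m n ▸ Set.mul_mem_mul hm hn⟩
  | inv x _ hx => exact hx.imp fun n => hinv_mem n x

/-- The displacement function of a point under an isometric action. -/
def displacementSeminorm {X : Type*} [PseudoMetricSpace X] (φ : G →* (X ≃ᵢ X)) (x : X) :
    GroupSeminorm G where
  toFun g := dist (φ g x) x
  map_one' := by simp
  mul_le' g h := by
    calc dist (φ (g * h) x) x ≤ dist (φ (g * h) x) (φ g x) + dist (φ g x) x := dist_triangle ..
      _ = dist (φ g x) x + dist (φ h x) x := by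
        rw [map_mul, IsometryEquiv.mul_apply, (φ g).dist_eq, add_comm]
  inv' g := by rw [← (φ g).dist_eq, ← IsometryEquiv.mul_apply, ← map_mul]; simp [dist_comm]

theorem StronglyBounded.isBounded_orbit (h : StronglyBounded G) {X : Type*}
    [PseudoMetricSpace X] (φ : G →* (X ≃ᵢ X)) (x : X) :
    Bornology.IsBounded (Set.range fun g => φ g x) := by
  obtain ⟨C, hC⟩ := h (displacementSeminorm φ x)
  exact (Metric.isBounded_closedBall (x := x) (r := C)).subset (Set.range_subset_iff.2 hC)

end StronglyBounded

section DiagonalArgument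

theorem exists_coord_forall_exists_le {K : ℕ → Type*} (F : (∀ n, K n) → ℝ) :
    ∃ n : ℕ, ∀ k : K n, ∃ f, f n = k ∧ F f ≤ n := by
  by_contra! hF
  choose f hf using hF
  obtain ⟨n, hn⟩ := exists_nat_ge (F f)
  exact (hf n f rfl).not_ge hn

/-- The permutation of `ℕ × ℤ` that shifts row `m` one step to the left. -/
def rowShift (m : ℕ) : Equiv.Perm (ℕ × ℤ) :=
  Equiv.prodShear (Equiv.refl ℕ) fun n => if n = m then Equiv.subRight 1 else Equiv.refl ℤ

theorem mul_inv_comp_rowShift_eq_mulSingle {K : Type*} [Group K] {m : ℕ} {u : K}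
    {f : ℕ × ℤ → K} (hf : ∀ k, f (m, k) = if 0 ≤ k then u else 1) :
    f * (f ∘ rowShift m)⁻¹ = Pi.mulSingle (m, 0) u := by
  ext ⟨n, k⟩
  rcases eq_or_ne n m with rfl | hn
  · have hshift : f (rowShift n (n, k)) = if 1 ≤ k then u else 1 := by
      simp [rowShift, hf]
    rcases lt_trichotomy k 0 with hk | rfl | hk
    · simp [hf, hshift, hk.not_ge, hk.ne, show ¬ 1 ≤ k by lia]
    · simp [hf, hshift]
    · simp [hf, hshift, hk.le, hk.ne', show 1 ≤ k by lia]
  · simp [rowShift, hn]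

/-- A swindle: an element supported on one coordinate is the commutator with a row shift of any
diagonal element that is constant on a half-row and trivial on the rest of that row. By
diagonalizing over the rows, in some row all such elements can be chosen short. -/
theorem exists_bddAbove_apply_mulSingle {G K : Type*} [Group G] [Group K] (ℓ : GroupSeminorm G)
    (Δ : (ℕ × ℤ → K) →* G)
    (hΔ : ∀ σ : Equiv.Perm (ℕ × ℤ), ∃ p : G, ∀ f, Δ (f ∘ σ) = p * Δ f * p⁻¹) :
    ∃ j C, ∀ u, ℓ (Δ (Pi.mulSingle j u)) ≤ C := by
  obtain ⟨m, hm⟩ := exists_coord_forall_exists_le (K := fun _ => ℤ → K)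
    fun f => ℓ (Δ (Function.uncurry f))
  obtain ⟨p, hp⟩ := hΔ (rowShift m)
  refine ⟨(m, 0), m + (ℓ p + m + ℓ p), fun u => ?_⟩
  obtain ⟨f, hfm, hf⟩ := hm fun k => if 0 ≤ k then u else 1
  have hsingle : Δ (Pi.mulSingle (m, 0) u) =
      Δ (Function.uncurry f) / (p * Δ (Function.uncurry f) * p⁻¹) := by
    rw [← mul_inv_comp_rowShift_eq_mulSingle (f := Function.uncurry f) (congrFun hfm), map_mul,
      map_inv, hp, div_eq_mul_inv]
  calc ℓ (Δ (Pi.mulSingle (m, 0) u))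
      ≤ ℓ (Δ (Function.uncurry f)) + ℓ (p * Δ (Function.uncurry f) * p⁻¹) :=
        hsingle ▸ map_div_le_add ..
    _ ≤ ℓ (Δ (Function.uncurry f)) + (ℓ p + ℓ (Δ (Function.uncurry f)) + ℓ p) := by
        grw [map_mul_le_add, map_mul_le_add, map_inv_eq_map]
    _ ≤ m + (ℓ p + m + ℓ p) := by gcongr

end DiagonalArgument

section HilbertSum

variable {𝕜 : Type*} [RCLike 𝕜]

section Diagonal

variable {ι : Type*} {G : ι → Type*} [∀ i, NormedAddCommGroup (G i)]
  [∀ i, InnerProductSpace 𝕜 (G i)]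

/-- The block-diagonal isometries of a Hilbert sum. -/
noncomputable def hilbertSumDiagonal : (∀ i, G i ≃ₗᵢ[𝕜] G i) →* (lp G 2 ≃ₗᵢ[𝕜] lp G 2) where
  toFun f :=
    { toFun x := ⟨fun i => f i (x i), (lp.memℓp x).mono' fun i => ((f i).norm_map _).le⟩
      invFun x := ⟨fun i => (f i).symm (x i),
        (lp.memℓp x).mono' fun i => ((f i).symm.norm_map _).le⟩
      map_add' x y := lp.ext <| funext fun i => map_add (f i) (x i) (y i)
      map_smul' c x := lp.ext <| funext fun i => map_smul (f i) c (x i)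
      left_inv x := lp.ext <| funext fun i => (f i).symm_apply_apply (x i)
      right_inv x := lp.ext <| funext fun i => (f i).apply_symm_apply (x i)
      norm_map' x := (lp.norm_mono two_ne_zero fun i => ((f i).norm_map (x i)).le).antisymm
        (lp.norm_mono two_ne_zero fun i => ((f i).norm_map (x i)).ge) }
  map_one' := rfl
  map_mul' _ _ := rfl

theorem hilbertSumDiagonal_apply (f : ∀ i, G i ≃ₗᵢ[𝕜] G i) (x : lp G 2) (i : ι) :
    hilbertSumDiagonal f x i = f i (x i) := rfl

variable [DecidableEq ι]

theorem hilbertSumDiagonal_single (f : ∀ i, G i ≃ₗᵢ[𝕜] G i) (i : ι) (x : G i) :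
    hilbertSumDiagonal f (lp.single 2 i x) = lp.single 2 i (f i x) := by
  ext k
  rcases eq_or_ne k i with rfl | hk
  · simp [hilbertSumDiagonal_apply]
  · simp [hilbertSumDiagonal_apply, hk]

theorem apply_single_eq_single_of_forall_ne {j : ι} {g : lp G 2 ≃ₗᵢ[𝕜] lp G 2}
    (hg : ∀ i ≠ j, ∀ x, g (lp.single 2 i x) = lp.single 2 i x) (x : G j) :
    g (lp.single 2 j x) = lp.single 2 j (g (lp.single 2 j x) j) := by
  ext i
  rcases eq_or_ne i j with rfl | hi
  · rw [lp.single_apply_self]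
  · rw [lp.single_apply_ne _ _ _ hi]
    refine ext_inner_left 𝕜 fun y => ?_
    rw [← lp.inner_single_left, ← hg i hi, g.inner_map_map, lp.inner_single_left,
      lp.single_apply_ne _ _ _ hi]

theorem exists_apply_single_eq_single_apply {j : ι} {g : lp G 2 ≃ₗᵢ[𝕜] lp G 2}
    (hg : ∀ i ≠ j, ∀ x, g (lp.single 2 i x) = lp.single 2 i x) :
    ∃ u : G j ≃ₗᵢ[𝕜] G j, ∀ x, g (lp.single 2 j x) = lp.single 2 j (u x) := by
  have hg_symm : ∀ i ≠ j, ∀ x, g.symm (lp.single 2 i x) = lp.single 2 i x := fun i hi x => by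
    rw [LinearIsometryEquiv.symm_apply_eq, hg i hi]
  have hgj := apply_single_eq_single_of_forall_ne hg
  have hgj_symm := apply_single_eq_single_of_forall_ne hg_symm
  refine ⟨
    { toFun x := g (lp.single 2 j x) j
      invFun x := g.symm (lp.single 2 j x) j
      map_add' x y := by rw [lp.single_add, map_add]; rfl
      map_smul' c x := by rw [lp.single_smul, map_smul]; rfl
      left_inv x := by beta_reduce; rw [← hgj, g.symm_apply_apply, lp.single_apply_self]
      right_inv x := by beta_reduce; rw [← hgj_symm, g.apply_symm_apply, lp.single_apply_self]
      norm_map' x := ?_ }, hgj⟩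
  change ‖g (lp.single 2 j x) j‖ = ‖x‖
  rw [← lp.norm_single (p := 2) two_pos, ← hgj, g.norm_map, lp.norm_single two_pos]

theorem exists_hilbertSumDiagonal_mulSingle_eq {j : ι} {g : lp G 2 ≃ₗᵢ[𝕜] lp G 2}
    (hg : ∀ i ≠ j, ∀ x, g (lp.single 2 i x) = lp.single 2 i x) :
    ∃ u, hilbertSumDiagonal (Pi.mulSingle j u) = g := by
  obtain ⟨u, hu⟩ := exists_apply_single_eq_single_apply hg
  refine ⟨u, LinearIsometryEquiv.toContinuousLinearEquiv_injective <|
    ContinuousLinearEquiv.coe_injective <|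
    lp.ext_continuousLinearMap ENNReal.ofNat_ne_top fun i => ContinuousLinearMap.ext fun x => ?_⟩
  change hilbertSumDiagonal (Pi.mulSingle j u) (lp.single 2 i x) = g (lp.single 2 i x)
  rw [hilbertSumDiagonal_single]
  rcases eq_or_ne i j with rfl | hi
  · rw [Pi.mulSingle_eq_same, hu]
  · rw [Pi.mulSingle_eq_of_ne hi, hg i hi, LinearIsometryEquiv.coe_one, id]

end Diagonal

section Power

variable {ι κ E : Type*} [NormedAddCommGroup E] [InnerProductSpace 𝕜 E]

theorem memℓp_two_comp_perm (σ : Equiv.Perm ι) {x : ι → E} (hx : Memℓp x 2) :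
    Memℓp (x ∘ σ) 2 := by
  rw [memℓp_gen_iff (by norm_num)] at hx ⊢
  exact σ.summable_iff.2 hx

/-- The isometry of a Hilbert sum of copies of `E` that permutes the summands. -/
noncomputable def hilbertSumPermute (σ : Equiv.Perm ι) :
    lp (fun _ : ι => E) 2 ≃ₗᵢ[𝕜] lp (fun _ : ι => E) 2 where
  toFun x := ⟨x ∘ σ, memℓp_two_comp_perm σ (lp.memℓp x)⟩
  invFun x := ⟨x ∘ σ.symm, memℓp_two_comp_perm σ.symm (lp.memℓp x)⟩
  map_add' _ _ := rfl
  map_smul' _ _ := rfl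
  left_inv x := lp.ext <| funext fun i => congrArg x (σ.apply_symm_apply i)
  right_inv x := lp.ext <| funext fun i => congrArg x (σ.symm_apply_apply i)
  norm_map' x := by
    simp only [lp.norm_eq_tsum_rpow (p := 2) (by norm_num)]
    congr 1
    exact σ.tsum_eq fun i => ‖x i‖ ^ ENNReal.toReal 2

theorem hilbertSumDiagonal_comp_perm (σ : Equiv.Perm ι) (f : ι → E ≃ₗᵢ[𝕜] E) :
    hilbertSumDiagonal (f ∘ σ) =
      hilbertSumPermute σ * hilbertSumDiagonal f * (hilbertSumPermute σ)⁻¹ := by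
  rw [eq_mul_inv_iff_mul_eq]
  ext
  rfl

variable [DecidableEq ι]

theorem orthonormal_lpSingle {v : κ → E} (hv : Orthonormal 𝕜 v) :
    Orthonormal 𝕜 fun p : ι × κ => lp.single (E := fun _ => E) 2 p.1 (v p.2) := by
  classical
  rw [orthonormal_iff_ite] at hv ⊢
  rintro ⟨i, k⟩ ⟨j, l⟩
  rw [lp.inner_single_left]
  rcases eq_or_ne i j with rfl | hij
  · simp [hv]
  · simp [hij]

/-- The Hilbert basis of a Hilbert sum of copies of `E` made of copies of a Hilbert basis of `E`. -/
noncomputable def hilbertSumBasis [CompleteSpace E] (b : HilbertBasis κ 𝕜 E) :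
    HilbertBasis (ι × κ) 𝕜 (lp (fun _ : ι => E) 2) :=
  HilbertBasis.mkOfOrthogonalEqBot (orthonormal_lpSingle b.orthonormal) <| by
    refine (Submodule.eq_bot_iff _).2 fun x hx => lp.ext <| funext fun i => ?_
    refine b.repr.map_eq_zero_iff.1 <| lp.ext <| funext fun k => ?_
    rw [b.repr_apply_apply]
    exact (lp.inner_single_left i (b k) x).symm.trans (hx _ (Submodule.subset_span ⟨(i, k), rfl⟩))

theorem hilbertSumBasis_apply [CompleteSpace E] (b : HilbertBasis κ 𝕜 E) (p : ι × κ) :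
    hilbertSumBasis b p = lp.single 2 p.1 (b p.2) := by
  simp [hilbertSumBasis]

end Power

end HilbertSum

section OrthonormalFamilies

variable {𝕜 H : Type*} [RCLike 𝕜] [NormedAddCommGroup H] [InnerProductSpace 𝕜 H] {ι κ : Type*}

theorem orthonormal_sumElim_iff {s : ι → H} {d : κ → H} :
    Orthonormal 𝕜 (Sum.elim s d) ↔
      Orthonormal 𝕜 s ∧ Orthonormal 𝕜 d ∧ ∀ i j, inner 𝕜 (s i) (d j) = 0 := by
  refine ⟨fun h => ⟨h.comp _ Sum.inl_injective, h.comp _ Sum.inr_injective,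
    fun i j => h.2 Sum.inl_ne_inr⟩, fun ⟨hs, hd, hsd⟩ => ⟨Sum.rec hs.1 hd.1, ?_⟩⟩
  rintro (i | i) (j | j) hij
  · exact hs.2 (ne_of_apply_ne _ hij)
  · exact hsd i j
  · exact inner_eq_zero_symm.1 (hsd j i)
  · exact hd.2 (ne_of_apply_ne _ hij)

theorem orthonormal_sumElim_sumElim_iff {lam : Type*} {a : ι → H} {b : κ → H} {c : lam → H} :
    Orthonormal 𝕜 (Sum.elim (Sum.elim a b) c) ↔
      Orthonormal 𝕜 a ∧ Orthonormal 𝕜 b ∧ Orthonormal 𝕜 c ∧ (∀ i j, inner 𝕜 (a i) (b j) = 0) ∧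
        (∀ i j, inner 𝕜 (a i) (c j) = 0) ∧ ∀ i j, inner 𝕜 (b i) (c j) = 0 := by
  simp only [orthonormal_sumElim_iff, Sum.forall, Sum.elim_inl, Sum.elim_inr]
  tauto

theorem countable_of_orthonormal [TopologicalSpace.SeparableSpace H] {v : ι → H}
    (hv : Orthonormal 𝕜 v) : Countable ι := by
  refine Pairwise.countable_of_isOpen_disjoint (s := fun i => Metric.ball (v i) (1 / 2))
    (fun i j hij => Metric.ball_disjoint_ball ?_) (fun i => Metric.isOpen_ball)
    (fun i => ⟨v i, by simp⟩)
  have hsq : ‖v i - v j‖ ^ 2 = 2 := by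
    rw [@norm_sub_sq 𝕜, hv.1 i, hv.1 j, hv.2 hij, map_zero]
    norm_num
  rw [dist_eq_norm]
  nlinarith [norm_nonneg (v i - v j)]

theorem mem_orthogonal_span_range_iff {s : ι → H} {x : H} :
    x ∈ (Submodule.span 𝕜 (Set.range s))ᗮ ↔ ∀ i, inner 𝕜 (s i) x = 0 := by
  rw [← Submodule.span_singleton_le_iff_mem, ← Submodule.isOrtho_iff_le, Submodule.isOrtho_span]
  simp [inner_eq_zero_symm (x := x)]

theorem not_finiteDimensional_of_orthonormal [Infinite ι] {P : Submodule 𝕜 H} {v : ι → H}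
    (hv : Orthonormal 𝕜 v) (hvP : ∀ i, v i ∈ P) : ¬ FiniteDimensional 𝕜 P := fun _ => by
  have hli : LinearIndependent 𝕜 fun i => (⟨v i, hvP i⟩ : P) :=
    LinearIndependent.of_comp P.subtype hv.linearIndependent
  exact not_finite_iff_infinite.2 ‹_› hli.finite

theorem not_finiteDimensional_orthogonal_span_range [Infinite κ] {s : ι → H} {d : κ → H}
    (hsd : Orthonormal 𝕜 (Sum.elim s d)) :
    ¬ FiniteDimensional 𝕜 (Submodule.span 𝕜 (Set.range s))ᗮ := by
  obtain ⟨-, hd, horth⟩ := orthonormal_sumElim_iff.1 hsd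
  exact not_finiteDimensional_of_orthonormal hd fun j =>
    mem_orthogonal_span_range_iff.2 fun i => horth i j

variable [CompleteSpace H]

theorem nonempty_hilbertBasis_of_equiv (b : HilbertBasis ι 𝕜 H) (e : κ ≃ ι) :
    Nonempty (HilbertBasis κ 𝕜 H) := by
  refine ⟨HilbertBasis.mk (b.orthonormal.comp e e.injective) ?_⟩
  rw [e.surjective.range_comp, b.dense_span]

theorem nonempty_hilbertBasis [TopologicalSpace.SeparableSpace H] (hH : ¬ FiniteDimensional 𝕜 H)
    (κ : Type*) [Countable κ] [Infinite κ] : Nonempty (HilbertBasis κ 𝕜 H) := by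
  obtain ⟨w, b, -⟩ := exists_hilbertBasis 𝕜 H
  have : Countable w := countable_of_orthonormal b.orthonormal
  have : Infinite w := by
    refine not_finite_iff_infinite.1 fun hfin => hH ?_
    have := Fintype.ofFinite w
    exact b.toOrthonormalBasis.toBasis.finiteDimensional_of_finite
  obtain ⟨e⟩ := nonempty_equiv_of_countable (α := κ) (β := w)
  exact nonempty_hilbertBasis_of_equiv b e

theorem exists_hilbertBasis_sumInl_eq {s : ι → H} (hs : Orthonormal 𝕜 s)
    (c : HilbertBasis κ 𝕜 (Submodule.span 𝕜 (Set.range s))ᗮ) :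
    ∃ b : HilbertBasis (ι ⊕ κ) 𝕜 H, ∀ i, b (Sum.inl i) = s i := by
  have hsc : Orthonormal 𝕜 (Sum.elim s fun k => (c k : H)) :=
    orthonormal_sumElim_iff.2 ⟨hs, c.orthonormal.comp_linearIsometry (Submodule.subtypeₗᵢ _),
      fun i k => mem_orthogonal_span_range_iff.1 (c k).2 i⟩
  refine ⟨HilbertBasis.mkOfOrthogonalEqBot hsc ((Submodule.eq_bot_iff _).2 fun x hx => ?_),
    fun i => by rw [HilbertBasis.coe_mkOfOrthogonalEqBot, Sum.elim_inl]⟩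
  rw [mem_orthogonal_span_range_iff] at hx
  lift x to (Submodule.span 𝕜 (Set.range s))ᗮ using
    mem_orthogonal_span_range_iff.2 fun i => hx (Sum.inl i)
  have hrepr : c.repr x = 0 := by
    ext k
    exact (c.repr_apply_apply x k).trans (hx (Sum.inr k))
  rw [c.repr.map_eq_zero_iff.1 hrepr, ZeroMemClass.coe_zero]

variable [TopologicalSpace.SeparableSpace H]

theorem exists_linearIsometryEquiv_apply_eq [Infinite κ] {κ' : Type*} [Infinite κ']
    {s r : ι → H} {d : κ → H} {d' : κ' → H}
    (hs : Orthonormal 𝕜 (Sum.elim s d)) (hr : Orthonormal 𝕜 (Sum.elim r d')) :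
    ∃ t : H ≃ₗᵢ[𝕜] H, ∀ i, t (s i) = r i := by
  classical
  obtain ⟨c⟩ := nonempty_hilbertBasis (not_finiteDimensional_orthogonal_span_range hs) ℕ
  obtain ⟨c'⟩ := nonempty_hilbertBasis (not_finiteDimensional_orthogonal_span_range hr) ℕ
  obtain ⟨b, hb⟩ := exists_hilbertBasis_sumInl_eq (orthonormal_sumElim_iff.1 hs).1 c
  obtain ⟨b', hb'⟩ := exists_hilbertBasis_sumInl_eq (orthonormal_sumElim_iff.1 hr).1 c'
  refine ⟨b.repr.trans b'.repr.symm, fun i => ?_⟩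
  rw [← hb, ← hb', LinearIsometryEquiv.trans_apply, b.repr_self, b'.repr_symm_single]

end OrthonormalFamilies

section Fixator

variable {𝕜 H : Type*} [RCLike 𝕜] [NormedAddCommGroup H] [InnerProductSpace 𝕜 H] {ι κ : Type*}

/-- The group of isometries of `H` that fix every vector of the family `s`. -/
def vectorFixator (s : ι → H) : Subgroup (H ≃ₗᵢ[𝕜] H) where
  carrier := {g | ∀ i, g (s i) = s i}
  one_mem' _ := rfl
  mul_mem' {g _} hg hh i := (congrArg g (hh i)).trans (hg i)
  inv_mem' {g} hg i := g.symm_apply_eq.2 (hg i).symm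

theorem conj_mem_vectorFixator {s r : ι → H} {t g : H ≃ₗᵢ[𝕜] H} (ht : ∀ i, t (s i) = r i)
    (hg : g ∈ vectorFixator s) : t * g * t⁻¹ ∈ vectorFixator r := fun i => by
  rw [← ht]
  change t (g (t.symm (t (s i)))) = t (s i)
  rw [t.symm_apply_apply, hg i]

variable [CompleteSpace H] [TopologicalSpace.SeparableSpace H]

theorem exists_mem_vectorFixator_apply_eq {lam mu : Type*} [Infinite lam] [Infinite mu]
    {c : ι → H} {s r : κ → H} {d : lam → H} {d' : mu → H}
    (hs : Orthonormal 𝕜 (Sum.elim (Sum.elim c s) d))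
    (hr : Orthonormal 𝕜 (Sum.elim (Sum.elim c r) d')) :
    ∃ t : H ≃ₗᵢ[𝕜] H, t ∈ vectorFixator c ∧ ∀ i, t (s i) = r i := by
  obtain ⟨t, ht⟩ := exists_linearIsometryEquiv_apply_eq hs hr
  exact ⟨t, fun i => ht (Sum.inl i), fun i => ht (Sum.inr i)⟩

end Fixator

section Factorization

variable {𝕜 H : Type*} [RCLike 𝕜] [NormedAddCommGroup H] [InnerProductSpace 𝕜 H]

theorem exists_norm_eq_one_mem_orthogonal {P : Submodule 𝕜 H} (hP : ¬ FiniteDimensional 𝕜 P)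
    (F : Submodule 𝕜 H) [FiniteDimensional 𝕜 F] : ∃ u ∈ P, ‖u‖ = 1 ∧ u ∈ Fᗮ := by
  obtain ⟨x, hxP, hxF, hx⟩ : ∃ x ∈ P, x ∈ Fᗮ ∧ x ≠ 0 := by
    by_contra! hbot
    refine hP (FiniteDimensional.of_injective
      (F.orthogonalProjectionOnto.toLinearMap ∘ₗ P.subtype) ?_)
    refine (injective_iff_map_eq_zero _).2 fun x hx => Subtype.ext ?_
    exact hbot x x.2 (Submodule.orthogonalProjectionOnto_eq_zero_iff.1 hx)
  exact ⟨(‖x‖⁻¹ : 𝕜) • x, P.smul_mem _ hxP, norm_smul_inv_norm hx, Fᗮ.smul_mem _ hxF⟩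

variable [CompleteSpace H]

theorem exists_orthonormal_pairwise_inner_apply_eq_zero {P : Submodule 𝕜 H}
    (hP : ¬ FiniteDimensional 𝕜 P) (T : H →L[𝕜] H) :
    ∃ f : ℕ → H, Orthonormal 𝕜 f ∧ (∀ n, f n ∈ P) ∧
      Pairwise fun m n => inner 𝕜 (f m) (T (f n)) = 0 := by
  classical
  let r (x y : H) : Prop := inner 𝕜 x y = 0 ∧ inner 𝕜 x (T y) = 0 ∧ inner 𝕜 y (T x) = 0
  have : Std.Symm r := ⟨fun x y h => ⟨inner_eq_zero_symm.1 h.1, h.2.2, h.2.1⟩⟩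
  have hext : ∀ s : Finset H, ∃ y, (y ∈ P ∧ ‖y‖ = 1) ∧ ∀ x ∈ s, r x y := fun s => by
    obtain ⟨y, hyP, hy, hys⟩ := exists_norm_eq_one_mem_orthogonal hP
      (Submodule.span 𝕜 ((s ∪ s.image T ∪ s.image T.adjoint : Finset H) : Set H))
    have hinner : ∀ x ∈ s ∪ s.image T ∪ s.image T.adjoint, inner 𝕜 x y = 0 := fun x hx =>
      hys x (Submodule.subset_span hx)
    refine ⟨y, ⟨hyP, hy⟩, fun x hx => ⟨hinner x (by grind), ?_, ?_⟩⟩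
    · rw [← T.adjoint_inner_left]
      exact hinner _ (by grind)
    · rw [inner_eq_zero_symm]
      exact hinner _ (by grind)
  obtain ⟨f, hf, hfr⟩ := exists_seq_of_forall_finset_exists' _ r fun s _ => hext s
  exact ⟨f, ⟨fun n => (hf n).2, hfr.mono fun _ _ h => h.1⟩, fun n => (hf n).1,
    hfr.mono fun _ _ h => h.2.1⟩

theorem exists_orthonormal_inner_apply_eq_zero {ι κ : Type*} [Countable κ] {c : ι → H}
    (hc : Orthonormal 𝕜 c) (hcinf : ¬ FiniteDimensional 𝕜 (Submodule.span 𝕜 (Set.range c))ᗮ)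
    (T : H →L[𝕜] H) :
    ∃ m n s : κ → H, Orthonormal 𝕜 (Sum.elim (Sum.elim c m) s) ∧
      Orthonormal 𝕜 (Sum.elim (Sum.elim c n) s) ∧
      (∀ i j, inner 𝕜 (n i) (T (m j)) = 0) ∧ ∀ i j, inner 𝕜 (s i) (T (m j)) = 0 := by
  obtain ⟨f, hf, hfc, hfT⟩ := exists_orthonormal_pairwise_inner_apply_eq_zero hcinf T
  obtain ⟨e, he⟩ := exists_injective_nat (Fin 3 × κ)
  have horth (k : Fin 3) : Orthonormal 𝕜 fun i => f (e (k, i)) :=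
    hf.comp _ (he.comp (Prod.mk_right_injective k))
  have hfc (k : Fin 3) (i : ι) (j : κ) : inner 𝕜 (c i) (f (e (k, j))) = 0 :=
    mem_orthogonal_span_range_iff.1 (hfc _) i
  have hne {k l : Fin 3} (hkl : k ≠ l) (i j : κ) : e (k, i) ≠ e (l, j) :=
    he.ne (ne_of_apply_ne Prod.fst hkl)
  refine ⟨fun i => f (e (0, i)), fun i => f (e (1, i)), fun i => f (e (2, i)), ?_, ?_, ?_, ?_⟩
  · exact orthonormal_sumElim_sumElim_iff.2
      ⟨hc, horth 0, horth 2, hfc 0, hfc 2, fun i j => hf.2 (hne (by decide) i j)⟩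
  · exact orthonormal_sumElim_sumElim_iff.2
      ⟨hc, horth 1, horth 2, hfc 1, hfc 2, fun i j => hf.2 (hne (by decide) i j)⟩
  · exact fun i j => hfT (hne (by decide) i j)
  · exact fun i j => hfT (hne (by decide) i j)

variable [TopologicalSpace.SeparableSpace H] {ι : Type*}

theorem exists_eq_mul_of_orthonormal [Infinite ι] {c a₁ a₂ : ι → H}
    (h : Orthonormal 𝕜 (Sum.elim (Sum.elim c a₁) a₂)) (g : H ≃ₗᵢ[𝕜] H) :
    ∃ x ∈ vectorFixator c, ∃ z ∈ vectorFixator a₂, ∃ y ∈ vectorFixator a₁,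
      ∃ w ∈ vectorFixator c, g = x * z * y * w := by
  obtain ⟨hc, h₁, h₂, hc₁, hc₂, h₁₂⟩ := orthonormal_sumElim_sumElim_iff.1 h
  have : Countable ι := countable_of_orthonormal hc
  have hc₂₁ : Orthonormal 𝕜 (Sum.elim (Sum.elim c a₂) a₁) := orthonormal_sumElim_sumElim_iff.2
    ⟨hc, h₂, h₁, hc₂, hc₁, fun i j => inner_eq_zero_symm.1 (h₁₂ j i)⟩
  have h₂₁c : Orthonormal 𝕜 (Sum.elim (Sum.elim a₂ a₁) c) := orthonormal_sumElim_sumElim_iff.2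
    ⟨h₂, h₁, hc, fun i j => inner_eq_zero_symm.1 (h₁₂ j i),
      fun i j => inner_eq_zero_symm.1 (hc₂ j i), fun i j => inner_eq_zero_symm.1 (hc₁ j i)⟩
  obtain ⟨m, n, s, hcms, hcns, hnm, hsm⟩ := exists_orthonormal_inner_apply_eq_zero (κ := ι) hc
    (not_finiteDimensional_orthogonal_span_range (orthonormal_sumElim_iff.2 ⟨hc, h₁, hc₁⟩))
    (g : H →L[𝕜] H)
  obtain ⟨-, -, hs, -, -, hns⟩ := orthonormal_sumElim_sumElim_iff.1 hcns
  obtain ⟨w, hwc, hw⟩ := exists_mem_vectorFixator_apply_eq h hcms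
  obtain ⟨x, hxc, hx⟩ := exists_mem_vectorFixator_apply_eq hcns hc₂₁
  -- `x * g * w` carries `a₁` orthogonally to `a₂` with infinite-dimensional complement to spare, so
  -- an isometry fixing `a₂` can imitate it on `a₁`.
  let k := x * g * w
  have hk (i : ι) : k (a₁ i) = x (g (m i)) := congrArg (x * g) (hw i)
  have hk₂s : Orthonormal 𝕜 (Sum.elim (Sum.elim a₂ (k ∘ a₁)) (x ∘ s)) := by
    refine orthonormal_sumElim_sumElim_iff.2 ⟨h₂, h₁.comp_linearIsometryEquiv k,
      hs.comp_linearIsometryEquiv x, fun i j => ?_, fun i j => ?_, fun i j => ?_⟩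
    · rw [Function.comp_apply, hk, ← hx, x.inner_map_map]
      exact hnm i j
    · rw [Function.comp_apply, ← hx, x.inner_map_map, hns]
    · rw [Function.comp_apply, Function.comp_apply, hk, x.inner_map_map, inner_eq_zero_symm]
      exact hsm j i
  obtain ⟨z, hz₂, hz⟩ := exists_mem_vectorFixator_apply_eq h₂₁c hk₂s
  have hzk : z⁻¹ * k ∈ vectorFixator a₁ := fun i => z.symm_apply_eq.2 (hz i).symm
  exact ⟨x⁻¹, inv_mem hxc, z, hz₂, z⁻¹ * k, hzk, w⁻¹, inv_mem hwc, by simp only [k]; group⟩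

variable {κ lam : Type*} [Infinite κ] [Infinite lam]

theorem exists_le_vectorFixator_of_orthonormal (ℓ : GroupSeminorm (H ≃ₗᵢ[𝕜] H))
    {s r : ι → H} {d : κ → H} {d' : lam → H} (hs : Orthonormal 𝕜 (Sum.elim s d))
    (hr : Orthonormal 𝕜 (Sum.elim r d')) {C : ℝ} (hC : ∀ g ∈ vectorFixator s, ℓ g ≤ C) :
    ∃ C', ∀ g ∈ vectorFixator r, ℓ g ≤ C' := by
  obtain ⟨t, ht⟩ := exists_linearIsometryEquiv_apply_eq hr hs
  refine ⟨ℓ t + C + ℓ t, fun g hg => ?_⟩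
  calc ℓ g = ℓ (t⁻¹ * (t * g * t⁻¹) * t) := by group
    _ ≤ ℓ t⁻¹ + ℓ (t * g * t⁻¹) + ℓ t := by grw [map_mul_le_add, map_mul_le_add]
    _ ≤ ℓ t + C + ℓ t := by
      rw [map_inv_eq_map]
      gcongr
      exact hC _ (conj_mem_vectorFixator ht hg)

theorem exists_le_of_forall_mem_vectorFixator_le [Infinite ι] (ℓ : GroupSeminorm (H ≃ₗᵢ[𝕜] H))
    {s : ι → H} {d : κ → H} (hsd : Orthonormal 𝕜 (Sum.elim s d)) {C : ℝ}
    (hC : ∀ g ∈ vectorFixator s, ℓ g ≤ C) : ∃ C', ∀ g, ℓ g ≤ C' := by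
  have hs : Orthonormal 𝕜 s := (orthonormal_sumElim_iff.1 hsd).1
  have : Countable ι := countable_of_orthonormal hs
  have hH : ¬ FiniteDimensional 𝕜 H := fun _ =>
    not_finite_iff_infinite.2 ‹Infinite ι› hs.linearIndependent.finite
  obtain ⟨b⟩ := nonempty_hilbertBasis hH (Fin 3 × ι)
  have hb (k : Fin 3) : Orthonormal 𝕜 fun i => b (k, i) :=
    b.orthonormal.comp _ (Prod.mk_right_injective k)
  have hbb {k l : Fin 3} (hkl : k ≠ l) (i j : ι) : inner 𝕜 (b (k, i)) (b (l, j)) = 0 :=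
    b.orthonormal.2 (ne_of_apply_ne Prod.fst hkl)
  have hbound (k : Fin 3) : ∃ C', ∀ g ∈ vectorFixator fun i => b (k, i), ℓ g ≤ C' :=
    exists_le_vectorFixator_of_orthonormal ℓ hsd
      (orthonormal_sumElim_iff.2 ⟨hb k, hb (k + 1), hbb (by simp)⟩) hC
  choose C' hC' using hbound
  refine ⟨C' 0 + C' 2 + C' 1 + C' 0, fun g => ?_⟩
  obtain ⟨x, hx, z, hz, y, hy, w, hw, rfl⟩ := exists_eq_mul_of_orthonormal
    (orthonormal_sumElim_sumElim_iff.2 ⟨hb 0, hb 1, hb 2, hbb (by decide), hbb (by decide),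
      hbb (by decide)⟩) g
  calc ℓ (x * z * y * w) ≤ ℓ x + ℓ z + ℓ y + ℓ w := by
        grw [map_mul_le_add, map_mul_le_add, map_mul_le_add]
    _ ≤ C' 0 + C' 2 + C' 1 + C' 0 := by
        gcongr
        exacts [hC' 0 x hx, hC' 2 z hz, hC' 1 y hy, hC' 0 w hw]

end Factorization

section UnitaryGroup

variable {𝕜 H : Type*} [RCLike 𝕜] [NormedAddCommGroup H] [InnerProductSpace 𝕜 H] [CompleteSpace H]

theorem exists_hilbertSumDiagonal_mulSingle_eq_of_mem_vectorFixator {ι κ : Type*} [DecidableEq ι]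
    (b : HilbertBasis κ 𝕜 H) {j : ι} {g : lp (fun _ : ι => H) 2 ≃ₗᵢ[𝕜] lp (fun _ : ι => H) 2}
    (hg : g ∈ vectorFixator fun p : {i // i ≠ j} × κ => hilbertSumBasis b (p.1.1, p.2)) :
    ∃ u : H ≃ₗᵢ[𝕜] H, hilbertSumDiagonal (Pi.mulSingle j u) = g := by
  refine exists_hilbertSumDiagonal_mulSingle_eq (G := fun _ => H) fun i hi x => ?_
  let S := lp.singleContinuousLinearMap 𝕜 (fun _ : ι => H) 2 i
  have hS : (g : _ →L[𝕜] _) ∘L S = S := by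
    refine ContinuousLinearMap.ext_on (s := Set.range b) ?_ ?_
    · exact Submodule.dense_iff_topologicalClosure_eq_top.2 b.dense_span
    · rintro _ ⟨k, rfl⟩
      have hfix : g (lp.single 2 i (b k)) = lp.single 2 i (b k) := by
        simpa only [hilbertSumBasis_apply] using hg (⟨i, hi⟩, k)
      exact hfix
  exact DFunLike.congr_fun hS x

variable [TopologicalSpace.SeparableSpace H]

theorem nonempty_linearIsometryEquiv_hilbertSum (hH : ¬ FiniteDimensional 𝕜 H) (ι : Type*)
    [Countable ι] [Nonempty ι] : Nonempty (H ≃ₗᵢ[𝕜] lp (fun _ : ι => H) 2) := by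
  classical
  obtain ⟨b⟩ := nonempty_hilbertBasis hH ℕ
  obtain ⟨b'⟩ := nonempty_hilbertBasis hH (ι × ℕ)
  exact ⟨b'.repr.trans (hilbertSumBasis b).repr.symm⟩

theorem stronglyBounded_linearIsometryEquiv_hilbertSum (hH : ¬ FiniteDimensional 𝕜 H) :
    StronglyBounded (lp (fun _ : ℕ × ℤ => H) 2 ≃ₗᵢ[𝕜] lp (fun _ : ℕ × ℤ => H) 2) := by
  intro ℓ
  obtain ⟨b⟩ := nonempty_hilbertBasis hH ℕ
  obtain ⟨T⟩ := nonempty_linearIsometryEquiv_hilbertSum hH (ℕ × ℤ)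
  have := T.surjective.denseRange.separableSpace T.continuous
  obtain ⟨j, C, hC⟩ := exists_bddAbove_apply_mulSingle ℓ (hilbertSumDiagonal (𝕜 := 𝕜))
    fun σ => ⟨hilbertSumPermute σ, hilbertSumDiagonal_comp_perm σ⟩
  have hB := (hilbertSumBasis (ι := ℕ × ℤ) b).orthonormal
  have hsd : Orthonormal 𝕜 (Sum.elim
      (fun p : {i // i ≠ j} × ℕ => hilbertSumBasis b (p.1.1, p.2))
      fun n : ℕ => hilbertSumBasis b (j, n)) :=
    orthonormal_sumElim_iff.2
      ⟨hB.comp _ (Subtype.val_injective.prodMap Function.injective_id),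
        hB.comp _ (Prod.mk_right_injective j), fun p n => hB.2 (ne_of_apply_ne Prod.fst p.1.2)⟩
  have : Nonempty {i // i ≠ j} := nonempty_subtype.2 (exists_ne j)
  refine exists_le_of_forall_mem_vectorFixator_le ℓ hsd (C := C) fun g hg => ?_
  obtain ⟨u, rfl⟩ := exists_hilbertSumDiagonal_mulSingle_eq_of_mem_vectorFixator b hg
  exact hC u

theorem stronglyBounded_unitary (hH : ¬ FiniteDimensional 𝕜 H) :
    StronglyBounded (unitary (H →L[𝕜] H)) := by
  obtain ⟨T⟩ := nonempty_linearIsometryEquiv_hilbertSum hH (ℕ × ℤ)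
  let e := (Unitary.mapEquiv { T.conjStarAlgEquiv with }).toMulEquiv.trans
    Unitary.linearIsometryEquiv
  exact (stronglyBounded_linearIsometryEquiv_hilbertSum hH).of_surjective e.symm.toMonoidHom
    e.symm.surjective

theorem unitary_group_cayleyBounded_and_uncountableCofinality_general
    (hH : ¬ FiniteDimensional 𝕜 H) :
    CayleyBounded (unitary (H →L[𝕜] H)) ∧
    UncountableCofinality (unitary (H →L[𝕜] H)) ∧
    ∀ (X : Type*) [PseudoMetricSpace X] (φ : unitary (H →L[𝕜] H) →* (X ≃ᵢ X)) (x : X),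
      Bornology.IsBounded (Set.range fun g : unitary (H →L[𝕜] H) => φ g x) :=
  have h := stronglyBounded_unitary hH
  ⟨h.cayleyBounded, h.uncountableCofinality, fun _ => h.isBounded_orbit⟩

end UnitaryGroup

/-- The unitary group of separable infinite-dimensional complex Hilbert space, as a
discrete group, is Cayley bounded and has uncountable cofinality; equivalently, every
action by isometries on a metric space has all orbits bounded. -/
theorem unitary_group_cayleyBounded_and_uncountableCofinality
    (H : Type*) [NormedAddCommGroup H] [InnerProductSpace ℂ H] [CompleteSpace H]
    [TopologicalSpace.SeparableSpace H] (hH : ¬ FiniteDimensional ℂ H) :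
    CayleyBounded (unitary (H →L[ℂ] H)) ∧
    UncountableCofinality (unitary (H →L[ℂ] H)) ∧
    ∀ (X : Type) [MetricSpace X] (φ : unitary (H →L[ℂ] H) →* (X ≃ᵢ X)) (x : X),
      Bornology.IsBounded (Set.range fun g : unitary (H →L[ℂ] H) => φ g x) := by
  obtain ⟨hcayley, hcof, horbit⟩ :=
    unitary_group_cayleyBounded_and_uncountableCofinality_general hH
  exact ⟨hcayley, hcof, fun X _ => horbit X⟩
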